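/- arXiv:1612.03368 — 4 statements merged into one kernel-verified Lean document; each statement's English description precedes it below -/
import Mathlib

section
/- Let S² denote the unit sphere {x ∈ ℝ³ : ‖x‖ = 1} in Euclidean 3-space, regarded as a topological space with the subspace topology. If R₁, R₂, R₃ are closed connected subsets of S² such that R₁ ∪ R₂ ∪ R₃ = S² and each of the pairwise intersections R₁ ∩ R₂, R₂ ∩ R₃, R₁ ∩ R₃ is nonempty, then R₁ ∩ R₂ ∩ R₃ is nonempty. -/
open Complex in
theorem aux_log_vec {V : Type*} [AddCommGroup V] [Module ℝ V] [TopologicalSpace V]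
    [ContinuousSMul ℝ V] (G : V → ℂ) (hG : Continuous G) (h0 : ∀ v, G v ≠ 0) :
    ∃ L : V → ℂ, Continuous L ∧ ∀ v, exp (L v) = G v := by
  let H : C(unitInterval × V, {z : ℂ // z ≠ 0}) :=
    ⟨fun q => ⟨G ((q.1 : ℝ) • q.2), h0 _⟩, by fun_prop⟩
  let f : C(V, ℂ) := ContinuousMap.const _ (log (G 0))
  have H0 : ∀ a, H (0, a) = (fun z : ℂ ↦ (⟨_, z.exp_ne_zero⟩ : {z : ℂ // z ≠ 0})) (f a) := by
    intro a
    apply Subtype.ext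
    simp [H, f, exp_log (h0 0)]
  refine ⟨fun v => isCoveringMap_exp.liftHomotopy H f H0 (1, v), by fun_prop, fun v => ?_⟩
  have := congrArg Subtype.val (congrFun (isCoveringMap_exp.liftHomotopy_lifts H f H0) (1, v))
  simpa [H] using this

open Complex in
theorem aux_log_sphere (F : Metric.sphere (0 : EuclideanSpace ℝ (Fin 3)) 1 → ℂ)
    (hF : Continuous F) (h0 : ∀ v, F v ≠ 0) :
    ∃ L : Metric.sphere (0 : EuclideanSpace ℝ (Fin 3)) 1 → ℂ,
      Continuous L ∧ ∀ v, exp (L v) = F v := by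
  have hmem : ∀ (s : ℝ), s ^ 2 = 1 → ∀ v : ℂ,
      (!₂[2 * v.re / (1 + v.re ^ 2 + v.im ^ 2), 2 * v.im / (1 + v.re ^ 2 + v.im ^ 2),
        s * (1 - v.re ^ 2 - v.im ^ 2) / (1 + v.re ^ 2 + v.im ^ 2)] : EuclideanSpace ℝ (Fin 3)) ∈
        Metric.sphere (0 : EuclideanSpace ℝ (Fin 3)) 1 := by
    intro s hs v
    have hp : 0 < 1 + v.re ^ 2 + v.im ^ 2 := by positivity
    rw [mem_sphere_zero_iff_norm, EuclideanSpace.norm_eq, Real.sqrt_eq_one]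
    simp only [Fin.sum_univ_three, Real.norm_eq_abs, sq_abs]
    simp
    field_simp
    rw [hs]; ring
  let e : ∀ (s : ℝ), s ^ 2 = 1 → ℂ → Metric.sphere (0 : EuclideanSpace ℝ (Fin 3)) 1 :=
    fun s hs v => ⟨_, hmem s hs v⟩
  have he : ∀ s hs, Continuous (e s hs) := by
    intro s hs
    refine Continuous.subtype_mk ?_ _
    have hp : ∀ v : ℂ, 1 + v.re ^ 2 + v.im ^ 2 ≠ 0 := fun v => by positivity
    refine (PiLp.continuous_toLp 2 _).comp (continuous_pi fun i => ?_)
    fin_cases i <;> simp <;> fun_prop (disch := exact hp)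
  obtain ⟨L1, hL1, hE1⟩ := aux_log_vec (fun v => F (e 1 (by norm_num) v))
    (hF.comp (he _ (by norm_num))) (fun v => h0 _)
  obtain ⟨L2, hL2, hE2⟩ := aux_log_vec (fun v => F (e (-1) (by norm_num) v))
    (hF.comp (he _ (by norm_num))) (fun v => h0 _)
  have heq : ∀ v ∈ Metric.sphere (0 : ℂ) 1, e 1 (by norm_num) v = e (-1) (by norm_num) v := by
    intro v hv
    have h1 : v.re ^ 2 + v.im ^ 2 = 1 := by
      rw [mem_sphere_zero_iff_norm] at hv
      have := Complex.sq_norm v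
      rw [hv, Complex.normSq_apply] at this
      nlinarith
    apply Subtype.ext
    simp only [e]
    have h2 : 1 - v.re ^ 2 - v.im ^ 2 = 0 := by linarith
    rw [h2]; simp
  have h1m : (1 : ℂ) ∈ Metric.sphere (0 : ℂ) 1 := by simp
  have hc : exp (L1 1 - L2 1) = 1 := by
    rw [exp_sub, hE1, hE2, heq 1 h1m, div_self (h0 _)]
  have hE2' : ∀ v, exp (L2 v + (L1 1 - L2 1)) = F (e (-1) (by norm_num) v) := by
    intro v; rw [exp_add, hc, hE2, mul_one]
  have hag : Set.EqOn L1 (fun v => L2 v + (L1 1 - L2 1)) (Metric.sphere (0 : ℂ) 1) := by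
    refine isCoveringMap_exp.eqOn_of_comp_eqOn
      (isPreconnected_sphere (by rw [Complex.rank_real_complex]; norm_num) _ _)
      hL1.continuousOn (by fun_prop) ?_ h1m (by ring)
    intro v hv
    apply Subtype.ext
    simp only [Function.comp]
    rw [hE1, hE2', heq v hv]
  let p : Metric.sphere (0 : EuclideanSpace ℝ (Fin 3)) 1 → ℂ :=
    fun x => ⟨x.1 0 / (1 + |x.1 2|), x.1 1 / (1 + |x.1 2|)⟩
  have hp : Continuous p := by
    have h : ∀ x : Metric.sphere (0 : EuclideanSpace ℝ (Fin 3)) 1, 1 + |x.1 2| ≠ 0 :=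
      fun x => by positivity
    have : p = fun x => ((x.1 0 / (1 + |x.1 2|) : ℝ) : ℂ) + (x.1 1 / (1 + |x.1 2|) : ℝ) * I := by
      funext x
      apply Complex.ext <;>
        simp [p, -ofReal_div, ofReal_re, ofReal_im]
    rw [this]
    refine Continuous.add (continuous_ofReal.comp ?_)
      ((continuous_ofReal.comp ?_).mul continuous_const)
    all_goals fun_prop (disch := exact h)
  have hS : ∀ x : Metric.sphere (0 : EuclideanSpace ℝ (Fin 3)) 1,
      x.1 0 ^ 2 + x.1 1 ^ 2 + x.1 2 ^ 2 = 1 := by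
    intro x
    have := x.2
    rw [mem_sphere_zero_iff_norm, EuclideanSpace.norm_eq, Real.sqrt_eq_one] at this
    simpa [Fin.sum_univ_three, Real.norm_eq_abs, sq_abs] using this
  have hinv : ∀ s hs x, s * |x.1 2| = x.1 2 → e s hs (p x) = x := by
    intro s hs x hx
    have h3 := hS x
    have hq : 0 ≤ |x.1 2| := abs_nonneg _
    have h4 : x.1 2 ^ 2 = |x.1 2| ^ 2 := (sq_abs _).symm
    rw [h4] at h3
    have hD : 1 + (p x).re ^ 2 + (p x).im ^ 2 = 2 / (1 + |x.1 2|) := by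
      simp only [p]
      field_simp
      nlinarith
    have hN : 1 - (p x).re ^ 2 - (p x).im ^ 2 = 2 * |x.1 2| / (1 + |x.1 2|) := by
      simp only [p]
      field_simp
      nlinarith
    apply Subtype.ext
    simp only [e]
    rw [hD, hN]
    ext i
    fin_cases i
    · simp [p]; field_simp
    · simp [p]; field_simp
    · simp; field_simp; exact hx
  refine ⟨fun x => if 0 ≤ x.1 2 then L1 (p x) else L2 (p x) + (L1 1 - L2 1), ?_, ?_⟩
  · refine Continuous.if_le (by fun_prop) (by fun_prop) (by fun_prop) (by fun_prop) ?_
    intro x hx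
    apply hag
    have h3 := hS x
    rw [← hx] at h3
    rw [mem_sphere_zero_iff_norm, ← pow_eq_one_iff_of_nonneg (norm_nonneg _) two_ne_zero, Complex.sq_norm,
      Complex.normSq_apply]
    simp only [p]
    rw [← hx]
    simp
    nlinarith
  · intro x
    dsimp only
    split_ifs with h
    · rw [hE1, hinv _ (by norm_num)]
      rw [abs_of_nonneg h, one_mul]
    · rw [hE2', hinv _ (by norm_num)]
      rw [abs_of_neg (not_le.1 h)]; ring

theorem aux_lt {X : Type*} [TopologicalSpace X] (K : Set X) (hK : IsPreconnected K) (θ : X → ℝ)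
    (hθ : Continuous θ) (α : ℝ) (h : ∀ x ∈ K, 0 < Real.cos (θ x - α)) (x y : X) (hx : x ∈ K)
    (hy : y ∈ K) : θ y < θ x + Real.pi := by
  by_contra hc
  push Not at hc
  obtain ⟨z, hz, hz'⟩ := hK.intermediate_value hx hy hθ.continuousOn
    ⟨by linarith [Real.pi_pos], hc⟩
  have h1 := h x hx
  have h2 := h z hz
  rw [hz', show θ x + Real.pi - α = (θ x - α) + Real.pi by ring, Real.cos_add_pi] at h2
  linarith

theorem aux_angle (r φ θ ψ : ℝ) (hr : 0 < r) (hφ : 0 ≤ φ)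
    (hc : r * Real.cos θ = φ * Real.cos ψ) (hs : r * Real.sin θ = φ * Real.sin ψ) :
    ∃ k : ℤ, θ - ψ = 2 * Real.pi * k := by
  have h1 : r ^ 2 = φ ^ 2 := by
    calc r ^ 2 = (r * Real.cos θ) ^ 2 + (r * Real.sin θ) ^ 2 := by
          linear_combination (-r ^ 2) * Real.sin_sq_add_cos_sq θ
      _ = φ ^ 2 := by
          rw [hc, hs]; linear_combination (φ ^ 2) * Real.sin_sq_add_cos_sq ψ
  have h2 : r = φ := (sq_eq_sq₀ hr.le hφ).1 h1
  subst h2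
  exact Real.Angle.angle_eq_iff_two_pi_dvd_sub.1
    (Real.Angle.cos_sin_inj (mul_left_cancel₀ hr.ne' hc) (mul_left_cancel₀ hr.ne' hs))

theorem aux_main {X : Type*} [MetricSpace X]
    (hlog : ∀ F : X → ℂ, Continuous F → (∀ v, F v ≠ 0) →
      ∃ L : X → ℂ, Continuous L ∧ ∀ v, Complex.exp (L v) = F v)
    (A B C : Set X) (hA : IsClosed A) (hB : IsClosed B) (hC : IsClosed C)
    (cA : IsPreconnected A) (cB : IsPreconnected B) (cC : IsPreconnected C)
    (hcov : ∀ x, x ∈ A ∨ x ∈ B ∨ x ∈ C)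
    (hAB : (A ∩ B).Nonempty) (hBC : (B ∩ C).Nonempty) (hAC : (A ∩ C).Nonempty) :
    (A ∩ B ∩ C).Nonempty := by
  by_contra hne
  have hno : ∀ x, x ∈ A → x ∈ B → x ∈ C → False := fun x a b c => hne ⟨x, ⟨a, b⟩, c⟩
  obtain ⟨z, hzA, hzB⟩ := hAB
  obtain ⟨x, hxB, hxC⟩ := hBC
  obtain ⟨y, hyA, hyC⟩ := hAC
  have mA : ∀ x, x ∈ A ↔ Metric.infDist x A = 0 := fun w => hA.mem_iff_infDist_zero ⟨z, hzA⟩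
  have mB : ∀ x, x ∈ B ↔ Metric.infDist x B = 0 := fun w => hB.mem_iff_infDist_zero ⟨z, hzB⟩
  have mC : ∀ x, x ∈ C ↔ Metric.infDist x C = 0 := fun w => hC.mem_iff_infDist_zero ⟨x, hxC⟩
  have ca : Continuous fun x => Metric.infDist x A := Metric.continuous_infDist_pt A
  have cb : Continuous fun x => Metric.infDist x B := Metric.continuous_infDist_pt B
  have cc : Continuous fun x => Metric.infDist x C := Metric.continuous_infDist_pt C
  have na : ∀ x, 0 ≤ Metric.infDist x A := fun x => Metric.infDist_nonneg
  have nb : ∀ x, 0 ≤ Metric.infDist x B := fun x => Metric.infDist_nonneg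
  have nc : ∀ x, 0 ≤ Metric.infDist x C := fun x => Metric.infDist_nonneg
  set a : X → ℝ := fun x => Metric.infDist x A with ha
  set b : X → ℝ := fun x => Metric.infDist x B with hb
  set c : X → ℝ := fun x => Metric.infDist x C with hc
  change ∀ x, x ∈ A ↔ a x = 0 at mA
  change ∀ x, x ∈ B ↔ b x = 0 at mB
  change ∀ x, x ∈ C ↔ c x = 0 at mC
  change ∀ x, 0 ≤ a x at na
  change ∀ x, 0 ≤ b x at nb
  change ∀ x, 0 ≤ c x at nc
  clear_value a b c
  clear ha hb hc
  have pA : ∀ x ∈ A, 0 < b x + c x := by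
    intro w hw
    by_contra h
    have h1 := nb w
    have h2 := nc w
    exact hno w hw ((mB w).2 (by linarith)) ((mC w).2 (by linarith))
  have pB : ∀ x ∈ B, 0 < a x + c x := by
    intro w hw
    by_contra h
    have h1 := na w
    have h2 := nc w
    exact hno w ((mA w).2 (by linarith)) hw ((mC w).2 (by linarith))
  have pC : ∀ x ∈ C, 0 < a x + b x := by
    intro w hw
    by_contra h
    have h1 := na w
    have h2 := nb w
    exact hno w ((mA w).2 (by linarith)) ((mB w).2 (by linarith)) hw
  have h3 : Real.sqrt 3 * Real.sqrt 3 = 3 := Real.mul_self_sqrt (by norm_num)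
  have h3p : 0 < Real.sqrt 3 := by positivity
  let F : X → ℂ := fun x => ((a x - (b x + c x) / 2 : ℝ) : ℂ)
    + ((Real.sqrt 3 / 2 * (b x - c x) : ℝ) : ℂ) * Complex.I
  have Fre : ∀ x, (F x).re = a x - (b x + c x) / 2 := by
    intro w
    simp only [F, Complex.add_re, Complex.ofReal_re, Complex.re_ofReal_mul, Complex.I_re]
    ring
  have Fim : ∀ x, (F x).im = Real.sqrt 3 / 2 * (b x - c x) := by
    intro w
    simp only [F, Complex.add_im, Complex.ofReal_im, Complex.im_ofReal_mul, Complex.I_im]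
    ring
  have hFc : Continuous F := by
    refine Continuous.add (Complex.continuous_ofReal.comp (by fun_prop))
      ((Complex.continuous_ofReal.comp (by fun_prop)).mul continuous_const)
  have hF0 : ∀ x, F x ≠ 0 := by
    intro w h
    have h1 := Fre w
    have h2 := Fim w
    rw [h, Complex.zero_re] at h1
    rw [h, Complex.zero_im] at h2
    have h4 : b w - c w = 0 := by
      rcases mul_eq_zero.1 h2.symm with h | h
      · linarith
      · exact h
    have hbw := nb w
    rcases hcov w with h | h | h
    · have := pA w h
      rw [mA] at h; linarith
    · have := pB w h
      rw [mB] at h; linarith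
    · have := pC w h
      rw [mC] at h; linarith
  obtain ⟨L, hL, hE⟩ := hlog F hFc hF0
  have hre : ∀ x, Real.exp (L x).re * Real.cos (L x).im = a x - (b x + c x) / 2 := by
    intro w; rw [← Fre, ← hE, Complex.exp_re]
  have him : ∀ x, Real.exp (L x).re * Real.sin (L x).im = Real.sqrt 3 / 2 * (b x - c x) := by
    intro w; rw [← Fim, ← hE, Complex.exp_im]
  have hθ : Continuous fun x => (L x).im := Complex.continuous_im.comp hL
  have tA := aux_lt A cA _ hθ Real.pi (by
    intro w hw
    have h1 := pA w hw
    rw [mA] at hw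
    have h2 := hre w
    rw [hw] at h2
    refine pos_of_mul_pos_right (a := Real.exp (L w).re) ?_ (Real.exp_pos _).le
    rw [Real.cos_sub_pi]
    linarith)
  have tB := aux_lt B cB _ hθ (-(Real.pi / 3)) (by
    intro w hw
    have h1 := pB w hw
    rw [mB] at hw
    have h2 := hre w
    have h4 := him w
    rw [hw] at h2 h4
    refine pos_of_mul_pos_right (a := Real.exp (L w).re) ?_ (Real.exp_pos _).le
    rw [sub_neg_eq_add, Real.cos_add, Real.cos_pi_div_three, Real.sin_pi_div_three]
    have : Real.exp (L w).re * (Real.cos (L w).im * (1 / 2) - Real.sin (L w).im * (√3 / 2))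
      = (a w + c w) / 2 := by
      linear_combination h2 / 2 - √3 / 2 * h4 + c w / 4 * h3
    rw [this]; linarith)
  have tC := aux_lt C cC _ hθ (Real.pi / 3) (by
    intro w hw
    have h1 := pC w hw
    rw [mC] at hw
    have h2 := hre w
    have h4 := him w
    rw [hw] at h2 h4
    refine pos_of_mul_pos_right (a := Real.exp (L w).re) ?_ (Real.exp_pos _).le
    rw [Real.cos_sub, Real.cos_pi_div_three, Real.sin_pi_div_three]
    have : Real.exp (L w).re * (Real.cos (L w).im * (1 / 2) + Real.sin (L w).im * (√3 / 2))
      = (a w + b w) / 2 := by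
      linear_combination h2 / 2 + √3 / 2 * h4 + b w / 4 * h3
    rw [this]; linarith)
  have hcos : Real.cos (2 * Real.pi / 3) = -(1 / 2) := by
    rw [show 2 * Real.pi / 3 = Real.pi - Real.pi / 3 by ring, Real.cos_pi_sub,
      Real.cos_pi_div_three]
  have hsin : Real.sin (2 * Real.pi / 3) = √3 / 2 := by
    rw [show 2 * Real.pi / 3 = Real.pi - Real.pi / 3 by ring, Real.sin_pi_sub,
      Real.sin_pi_div_three]
  obtain ⟨k, hk⟩ := aux_angle _ (a x) (L x).im 0 (Real.exp_pos (L x).re) (na x)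
    (by rw [hre, (mB x).1 hxB, (mC x).1 hxC, Real.cos_zero]; ring)
    (by rw [him, (mB x).1 hxB, (mC x).1 hxC, Real.sin_zero]; ring)
  obtain ⟨l, hl⟩ := aux_angle _ (b y) (L y).im (2 * Real.pi / 3) (Real.exp_pos (L y).re) (nb y)
    (by rw [hre, (mA y).1 hyA, (mC y).1 hyC, hcos]; ring)
    (by rw [him, (mC y).1 hyC, hsin]; ring)
  obtain ⟨m, hm⟩ := aux_angle _ (c z) (L z).im (-(2 * Real.pi / 3)) (Real.exp_pos (L z).re) (nc z)
    (by rw [hre, (mA z).1 hzA, (mB z).1 hzB, Real.cos_neg, hcos]; ring)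
    (by rw [him, (mB z).1 hzB, Real.sin_neg, hsin]; ring)
  have hπ := Real.pi_pos
  have i1 := tC x y hxC hyC
  have i2 := tC y x hyC hxC
  have i3 := tB x z hxB hzB
  have i4 := tB z x hzB hxB
  have i5 := tA z y hzA hyA
  have e1 : (L x).im = Real.pi * (2 * k) := by linarith
  have e2 : (L y).im = Real.pi * (2 / 3 + 2 * l) := by linarith
  have e3 : (L z).im = Real.pi * (-2 / 3 + 2 * m) := by linarith
  have key : ∀ u v : ℝ, Real.pi * u < Real.pi * v + Real.pi → u < v + 1 := by
    intro u v h
    by_contra h'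
    nlinarith
  simp only [e1, e2, e3] at i1 i2 i3 i4 i5
  replace i1 := key _ _ i1
  replace i2 := key _ _ i2
  replace i3 := key _ _ i3
  replace i4 := key _ _ i4
  replace i5 := key _ _ i5
  have j1 : l < k + 1 := by
    have : (l : ℝ) < k + 1 := by linarith
    exact_mod_cast this
  have j2 : k < l + 1 := by
    have : (k : ℝ) < l + 1 := by linarith
    exact_mod_cast this
  have j3 : m < k + 1 := by
    have : (m : ℝ) < k + 1 := by linarith
    exact_mod_cast this
  have j4 : k < m + 1 := by
    have : (k : ℝ) < m + 1 := by linarith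
    exact_mod_cast this
  have q1 : l = m := by omega
  rw [q1] at i5
  linarith

/-- The paper's Lemma 6.2 in the setting of the 2-sphere `S² ⊆ ℝ³`:
three closed connected subsets of `S²` that cover `S²` and pairwise intersect
must have a common point. -/
theorem stmt_5 (R₁ R₂ R₃ : Set (EuclideanSpace ℝ (Fin 3)))
    (hs₁ : R₁ ⊆ Metric.sphere 0 1) (hs₂ : R₂ ⊆ Metric.sphere 0 1)
    (hs₃ : R₃ ⊆ Metric.sphere 0 1)
    (hc₁ : IsClosed R₁) (hc₂ : IsClosed R₂) (hc₃ : IsClosed R₃)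
    (hconn₁ : IsConnected R₁) (hconn₂ : IsConnected R₂) (hconn₃ : IsConnected R₃)
    (hcover : R₁ ∪ R₂ ∪ R₃ = Metric.sphere 0 1)
    (h₁₂ : (R₁ ∩ R₂).Nonempty) (h₂₃ : (R₂ ∩ R₃).Nonempty)
    (h₁₃ : (R₁ ∩ R₃).Nonempty) :
    (R₁ ∩ R₂ ∩ R₃).Nonempty := by
  have hpre : ∀ R : Set (EuclideanSpace ℝ (Fin 3)), R ⊆ Metric.sphere 0 1 → IsConnected R →
      IsPreconnected ((Subtype.val : Metric.sphere (0 : EuclideanSpace ℝ (Fin 3)) 1 → _) ⁻¹' R) := by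
    intro R hR hc
    rw [← Topology.IsInducing.subtypeVal.isPreconnected_image, Subtype.image_preimage_coe,
      Set.inter_eq_right.2 hR]
    exact hc.isPreconnected
  obtain ⟨w, ⟨h1, h2⟩, h3⟩ := aux_main aux_log_sphere _ _ _
    (hc₁.preimage continuous_subtype_val) (hc₂.preimage continuous_subtype_val)
    (hc₃.preimage continuous_subtype_val) (hpre _ hs₁ hconn₁) (hpre _ hs₂ hconn₂)
    (hpre _ hs₃ hconn₃)
    (fun x => by
      have h := hcover.symm.subset x.2
      rcases h with (h | h) | h
      · exact Or.inl h
      · exact Or.inr (Or.inl h)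
      · exact Or.inr (Or.inr h))
    (by obtain ⟨w, h, h'⟩ := h₁₂; exact ⟨⟨w, hs₁ h⟩, h, h'⟩)
    (by obtain ⟨w, h, h'⟩ := h₂₃; exact ⟨⟨w, hs₂ h⟩, h, h'⟩)
    (by obtain ⟨w, h, h'⟩ := h₁₃; exact ⟨⟨w, hs₁ h⟩, h, h'⟩)
  exact ⟨w, ⟨h1, h2⟩, h3⟩
end

section
/- Let S² denote the unit sphere {x ∈ ℝ³ : ‖x‖ = 1} in Euclidean 3-space, with the distance induced from ℝ³, and for a point x and a nonempty set A ⊆ ℝ³ let infDist(x, A) denote the infimum of distances from x to points of A. Let D ⊆ S² be a nonempty compact set and let E ⊆ D be a nonempty compact connected set. Then the set R = {x ∈ S² : infDist(x, E) = infDist(x, D)} is closed in S² and connected. -/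
theorem aux_dist {x q d : EuclideanSpace ℝ (Fin 3)} (hq : ‖q‖ = 1) (hd : ‖d‖ = 1) :
    dist x q ≤ dist x d ↔ inner ℝ x d ≤ inner ℝ x q := by
  rw [dist_eq_norm, dist_eq_norm, ← sq_le_sq₀ (norm_nonneg _) (norm_nonneg _),
    norm_sub_sq_real, norm_sub_sq_real, hq, hd]
  constructor <;> intro h <;> linarith

theorem aux_mem {D E : Set (EuclideanSpace ℝ (Fin 3))}
    (hDsub : D ⊆ Metric.sphere 0 1) (hED : E ⊆ D) {x q : EuclideanSpace ℝ (Fin 3)}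
    (hq : q ∈ E) (h : ∀ d ∈ D, inner ℝ x d ≤ inner ℝ x q) :
    Metric.infDist x E = Metric.infDist x D := by
  have hn : ∀ d ∈ D, ‖d‖ = 1 := fun d hd => by simpa using hDsub hd
  apply le_antisymm
  · refine (Metric.infDist_le_dist_of_mem hq).trans ?_
    rw [Metric.le_infDist ⟨q, hED hq⟩]
    intro d hd
    exact (aux_dist (hn q (hED hq)) (hn d hd)).2 (h d hd)
  · exact Metric.infDist_le_infDist_of_subset hED ⟨q, hq⟩

/-- Key topological claim inside the proof of the paper's Lemma 6.1:
for a nonempty compact set `D ⊆ S²` and a nonempty compact connected subset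
`E ⊆ D`, the region `R = {x ∈ S² : infDist x E = infDist x D}` is closed and
connected. -/
theorem stmt_6 (D E : Set (EuclideanSpace ℝ (Fin 3)))
    (hDsub : D ⊆ Metric.sphere 0 1) (hDne : D.Nonempty) (hDcpt : IsCompact D)
    (hED : E ⊆ D) (hEne : E.Nonempty) (hEcpt : IsCompact E)
    (hEconn : IsConnected E) :
    IsClosed {x ∈ Metric.sphere (0 : EuclideanSpace ℝ (Fin 3)) 1 |
        Metric.infDist x E = Metric.infDist x D} ∧
      IsConnected {x ∈ Metric.sphere (0 : EuclideanSpace ℝ (Fin 3)) 1 |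
        Metric.infDist x E = Metric.infDist x D} := by
  have hn : ∀ d ∈ D, ‖d‖ = 1 := fun d hd => by simpa using hDsub hd
  refine ⟨?_, ?_⟩
  · exact Metric.isClosed_sphere.inter
      (isClosed_eq (Metric.continuous_infDist_pt E) (Metric.continuous_infDist_pt D))
  have hER : E ⊆ {x ∈ Metric.sphere (0 : EuclideanSpace ℝ (Fin 3)) 1 |
      Metric.infDist x E = Metric.infDist x D} := by
    intro e he
    refine ⟨hDsub (hED he), ?_⟩
    rw [Metric.infDist_zero_of_mem he, Metric.infDist_zero_of_mem (hED he)]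
  obtain ⟨e, he⟩ := hEne
  refine ⟨⟨e, hER he⟩, ?_⟩
  refine isPreconnected_of_forall e ?_
  rintro p ⟨hp, hpR⟩
  have hp1 : ‖p‖ = 1 := by simpa using hp
  obtain ⟨q, hq, hpq⟩ := hEcpt.exists_infDist_eq_dist ⟨e, he⟩ p
  have hq1 := hn q (hED hq)
  have hmax : ∀ d ∈ D, inner ℝ p d ≤ inner ℝ p q := by
    intro d hd
    rw [← aux_dist hq1 (hn d hd), ← hpq, hpR]
    exact Metric.infDist_le_dist_of_mem hd
  by_cases hanti : inner ℝ p q = -1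
  · -- antipodal case: `D = {q}` and the region is the whole sphere
    have hDq : ∀ d ∈ D, d = -p := by
      intro d hd
      have h1 := hmax d hd
      have h2 : ‖d + p‖ ^ 2 ≤ 0 := by
        rw [norm_add_sq_real, hn d hd, hp1, real_inner_comm]
        linarith
      have h3 : ‖d + p‖ = 0 := by
        have := sq_nonneg ‖d + p‖
        exact pow_eq_zero_iff (two_ne_zero) |>.1 (le_antisymm h2 this)
      exact eq_neg_of_add_eq_zero_left (norm_eq_zero.1 h3)
    refine ⟨Metric.sphere 0 1, ?_, hDsub (hED he), hp, ?_⟩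
    · intro x hx
      refine ⟨hx, aux_mem hDsub hED hq ?_⟩
      intro d hd
      rw [hDq d hd, hDq q (hED hq)]
    · refine isPreconnected_sphere ?_ 0 1
      rw [← Module.finrank_eq_rank]
      simp
  · have hne : ∀ y ∈ segment ℝ p q, y ≠ 0 := by
      rintro y ⟨a, b, ha, hb, hab, rfl⟩ h0
      have e1 : inner ℝ (a • p + b • q) (a • p + b • q) = (0 : ℝ) := by rw [h0]; simp
      have e2 : inner ℝ p (a • p + b • q) = (0 : ℝ) := by rw [h0]; simp
      have e3 : inner ℝ q (a • p + b • q) = (0 : ℝ) := by rw [h0]; simp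
      rw [inner_add_right, inner_smul_right, inner_smul_right,
        real_inner_self_eq_norm_sq, hp1] at e2
      rw [inner_add_right, inner_smul_right, inner_smul_right,
        real_inner_self_eq_norm_sq, hq1, real_inner_comm] at e3
      apply hanti
      have : (a + b) * (1 + inner ℝ p q) = 0 := by linarith
      rw [hab] at this
      linarith
    refine ⟨E ∪ (fun y => ‖y‖⁻¹ • y) '' segment ℝ p q, ?_, Or.inl he, Or.inr ?_, ?_⟩
    · apply Set.union_subset hER
      rintro _ ⟨y, hy, rfl⟩
      have hy0 := hne y hy
      refine ⟨by simp [norm_smul, hy0], aux_mem hDsub hED hq ?_⟩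
      intro d hd
      simp only [real_inner_smul_left]
      refine mul_le_mul_of_nonneg_left ?_ (by positivity)
      obtain ⟨a, b, ha, hb, hab, rfl⟩ := hy
      simp only [inner_add_left, real_inner_smul_left]
      have h1 : inner ℝ q d ≤ inner ℝ q q := by
        rw [real_inner_self_eq_norm_sq]
        have := real_inner_le_norm q d
        rw [hq1, hn d hd] at this
        rw [hq1]; linarith
      have := mul_le_mul_of_nonneg_left h1 hb
      have := mul_le_mul_of_nonneg_left (hmax d hd) ha
      linarith
    · exact ⟨p, left_mem_segment ℝ p q, by simp [hp1]⟩
    · refine IsPreconnected.union q hq ⟨q, right_mem_segment ℝ p q, by simp [hq1]⟩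
        hEconn.isPreconnected ?_
      refine (convex_segment p q).isPreconnected.image _ ?_
      exact (continuousOn_id.norm.inv₀ (fun y hy => norm_ne_zero_iff.2 (hne y hy))).smul
        continuousOn_id
end

section
/- Let S² denote the unit sphere {x ∈ ℝ³ : ‖x‖ = 1} in Euclidean 3-space, with the distance induced from ℝ³, and for a point x and a nonempty set A ⊆ ℝ³ let infDist(x, A) denote the infimum of distances from x to points of A. Let D₁, D₂, D₃ be nonempty compact connected subsets of S² such that each of the pairwise intersections D₁ ∩ D₂, D₂ ∩ D₃, D₁ ∩ D₃ is nonempty. Then there exists a point x ∈ S² with infDist(x, D₁) = infDist(x, D₂) = infDist(x, D₃). -/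
open Set Topology

abbrev Sph := Metric.sphere (0 : EuclideanSpace ℝ (Fin 3)) 1

lemma lift_const {X : Type*} [TopologicalSpace X] {S : Set X} (hS : IsPreconnected S)
    {u v : X → ℝ} (hu : ContinuousOn u S) (hv : ContinuousOn v S)
    (h : ∀ x ∈ S, Circle.exp (u x) = Circle.exp (v x)) {a : X} (ha : a ∈ S) :
    ∀ x ∈ S, u x = v x + (u a - v a) := by
  have key := Circle.isCoveringMap_exp.eqOn_of_comp_eqOn hS hu
    (g₂ := fun x => v x + (u a - v a)) (hv.add continuousOn_const) (by
      intro x hx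
      simp only [Function.comp_apply, Circle.exp_add, Circle.exp_sub, h x hx, h a ha]
      simp) ha (by ring)
  exact key

lemma lift_punctured (f : C(Sph, Circle)) (v : Sph) :
    ∃ φ : Sph → ℝ, ContinuousOn φ {v}ᶜ ∧ ∀ x, x ≠ v → Circle.exp (φ x) = f x := by
  have hv : ‖(v : EuclideanSpace ℝ (Fin 3))‖ = 1 := norm_eq_of_mem_sphere v
  let e := stereographic hv
  have hsrc : e.source = {v}ᶜ := stereographic_source hv
  have htgt : e.target = univ := stereographic_target hv
  have hc : Continuous e.symm := by
    rw [← continuousOn_univ, ← htgt]; exact e.continuousOn_symm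
  let F : C((Submodule.span ℝ {(v : EuclideanSpace ℝ (Fin 3))})ᗮ, Circle) := f.comp ⟨e.symm, hc⟩
  obtain ⟨e₀, he₀⟩ : ∃ t : ℝ, Circle.exp t = F 0 := ⟨_, Circle.exp_arg _⟩
  obtain ⟨G, ⟨-, hG⟩, -⟩ := Circle.isCoveringMap_exp.existsUnique_continuousMap_lifts F 0 e₀ he₀
  refine ⟨fun x => G (e x), ?_, ?_⟩
  · rw [← hsrc]
    exact G.continuous.comp_continuousOn e.continuousOn
  · intro x hx
    have := congrFun hG (e x)
    simp only [Function.comp_apply] at this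
    rw [this]
    change f (e.symm (e x)) = f x
    rw [e.left_inv (by rw [hsrc]; exact hx)]

lemma conn_twice_punctured (v : Sph) : IsPreconnected ({v}ᶜ ∩ {-v}ᶜ : Set Sph) := by
  have hv : ‖(v : EuclideanSpace ℝ (Fin 3))‖ = 1 := norm_eq_of_mem_sphere v
  let e := stereographic hv
  have hsrc : e.source = {v}ᶜ := stereographic_source hv
  have htgt : e.target = univ := stereographic_target hv
  have hc : Continuous e.symm := by
    rw [← continuousOn_univ, ← htgt]; exact e.continuousOn_symm
  have he : e (-v) = 0 := stereographic_apply_neg v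
  have hnv : -v ≠ v := by
    intro h
    have h1 : -(v : EuclideanSpace ℝ (Fin 3)) = v := congrArg Subtype.val h
    have h2 : (v : EuclideanSpace ℝ (Fin 3)) = 0 := by
      have h3 : (2 : ℝ) • (v : EuclideanSpace ℝ (Fin 3)) = 0 := by
        rw [two_smul]; nth_rewrite 1 [← h1]; exact neg_add_cancel _
      exact (smul_eq_zero.1 h3).resolve_left two_ne_zero
    rw [h2] at hv; simp at hv
  have hdim : 1 < Module.rank ℝ (Submodule.span ℝ {(v : EuclideanSpace ℝ (Fin 3))})ᗮ := by
    have : Fact (Module.finrank ℝ (EuclideanSpace ℝ (Fin 3)) = 2 + 1) := ⟨by simp⟩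
    have h2 : Module.finrank ℝ (Submodule.span ℝ {(v : EuclideanSpace ℝ (Fin 3))})ᗮ = 2 :=
      Submodule.finrank_orthogonal_span_singleton (by intro h; rw [h] at hv; simp at hv)
    rw [← Module.finrank_eq_rank, h2]
    norm_num
  have hcon := (isConnected_compl_singleton_of_one_lt_rank hdim 0).isPreconnected
  have := hcon.image e.symm hc.continuousOn
  convert this using 1
  ext x
  constructor
  · rintro ⟨h1, h2⟩
    have hx : x ∈ e.source := by rw [hsrc]; exact h1
    refine ⟨e x, ?_, e.left_inv hx⟩
    intro h
    apply h2
    have : e x = e (-v) := by rw [he]; exact h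
    exact e.injOn hx (by rw [hsrc]; exact hnv) this
  · rintro ⟨y, hy, rfl⟩
    have hyt : y ∈ e.target := by rw [htgt]; trivial
    refine ⟨hsrc ▸ e.map_target hyt, ?_⟩
    intro h
    apply hy
    have h' : e.symm y = -v := h
    have := e.right_inv hyt
    rw [h', he] at this
    exact this.symm

lemma lift_sphere (f : C(Sph, Circle)) :
    ∃ φ : Sph → ℝ, Continuous φ ∧ ∀ x, Circle.exp (φ x) = f x := by
  classical
  let v : Sph := ⟨EuclideanSpace.single 0 1, by simp⟩
  let w : Sph := ⟨EuclideanSpace.single 1 1, by simp⟩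
  have hwv : w ≠ v := by
    intro h
    have := congrArg (fun z : Sph => (z : EuclideanSpace ℝ (Fin 3)) 0) h
    simp [v, w] at this
  have hwv' : w ≠ -v := by
    intro h
    have := congrArg (fun z : Sph => (z : EuclideanSpace ℝ (Fin 3)) 0) h
    simp [v, w] at this
  have hvv : v ≠ -v := by
    intro h
    have := congrArg (fun z : Sph => (z : EuclideanSpace ℝ (Fin 3)) 0) h
    simp [v] at this
    norm_num at this
  obtain ⟨φ, hφ, hφf⟩ := lift_punctured f v
  obtain ⟨ψ, hψ, hψf⟩ := lift_punctured f (-v)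
  have key := lift_const (conn_twice_punctured v) (hφ.mono inter_subset_left)
    (hψ.mono inter_subset_right) (fun x hx => (hφf x hx.1).trans (hψf x hx.2).symm)
    (a := w) ⟨hwv, hwv'⟩
  have hexp : Circle.exp (φ w) = Circle.exp (ψ w) := (hφf w hwv).trans (hψf w hwv').symm
  refine ⟨fun x => if x = v then ψ x + (φ w - ψ w) else φ x, ?_, ?_⟩
  · rw [← continuousOn_univ]
    have hU : (univ : Set Sph) = {v}ᶜ ∪ {-v}ᶜ := by
      ext x
      simp only [mem_univ, mem_union, mem_compl_iff, mem_singleton_iff, true_iff]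
      by_contra! h
      exact hvv (h.1.symm.trans h.2)
    rw [hU]
    refine ContinuousOn.union_of_isOpen ?_ ?_ isOpen_compl_singleton isOpen_compl_singleton
    · refine hφ.congr fun x hx => ?_
      exact if_neg hx
    · refine (hψ.add (continuousOn_const (c := φ w - ψ w))).congr fun x hx => ?_
      split_ifs with h
      · rfl
      · exact key x ⟨h, hx⟩
  · intro x
    dsimp only
    split_ifs with h
    · rw [Circle.exp_add, Circle.exp_sub, hexp, div_self', mul_one]
      exact hψf x (by rw [h]; exact hvv)
    · exact hφf x h

lemma unicoherent {A B : Set Sph} (hA : IsClosed A) (hB : IsClosed B) (hAc : IsPreconnected A)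
    (hBc : IsPreconnected B) (hAB : A ∪ B = univ) {H K : Set Sph} (hH : IsClosed H)
    (hK : IsClosed K) (hHK : A ∩ B = H ∪ K) (hHn : H.Nonempty) (hKn : K.Nonempty) :
    (H ∩ K).Nonempty := by
  classical
  by_contra hd
  rw [not_nonempty_iff_eq_empty, ← disjoint_iff_inter_eq_empty] at hd
  obtain ⟨t, ht0, ht1, -⟩ := exists_continuous_zero_one_of_isClosed hH hK hd
  let g : Sph → Circle := fun x =>
    if x ∈ A then Circle.exp (Real.pi * t x) else Circle.exp (-(Real.pi * t x))
  have hgA : ∀ x ∈ A, g x = Circle.exp (Real.pi * t x) := fun x hx => if_pos hx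
  have hgB : ∀ x ∈ B, g x = Circle.exp (-(Real.pi * t x)) := by
    intro x hx
    by_cases h : x ∈ A
    · rw [hgA x h]
      have : x ∈ H ∪ K := hHK ▸ ⟨h, hx⟩
      rcases this with h | h
      · rw [ht0 h]; simp
      · rw [ht1 h]
        ext
        simp [Circle.coe_exp, Complex.exp_neg, Complex.exp_pi_mul_I]
    · exact if_neg h
  have hg : Continuous g := by
    rw [← continuousOn_univ, ← hAB]
    refine ContinuousOn.union_of_isClosed ?_ ?_ hA hB
    · exact ContinuousOn.congr (by fun_prop) hgA
    · exact ContinuousOn.congr (by fun_prop) hgB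
  obtain ⟨φ, hφ, hφg⟩ := lift_sphere ⟨g, hg⟩
  obtain ⟨a, ha⟩ := hHn
  obtain ⟨b, hb⟩ := hKn
  have haa : a ∈ A ∩ B := hHK ▸ Or.inl ha
  have hbb : b ∈ A ∩ B := hHK ▸ Or.inr hb
  have h1 := lift_const hAc hφ.continuousOn (v := fun x => Real.pi * t x) (by fun_prop)
    (fun x hx => (hφg x).trans (hgA x hx)) haa.1 b hbb.1
  have h2 := lift_const hBc hφ.continuousOn (v := fun x => -(Real.pi * t x)) (by fun_prop)
    (fun x hx => (hφg x).trans (hgB x hx)) haa.2 b hbb.2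
  simp only [ht0 ha, ht1 hb, Pi.zero_apply, Pi.one_apply] at h1 h2
  linarith [Real.pi_pos]

lemma dist_le_iff_inner {E : Type*} [NormedAddCommGroup E] [InnerProductSpace ℝ E] (x y w : E)
    (hy : ‖y‖ = 1) (hw : ‖w‖ = 1) : dist x y ≤ dist x w ↔ inner ℝ x w ≤ inner ℝ x y := by
  rw [dist_eq_norm, dist_eq_norm, ← sq_le_sq₀ (norm_nonneg _) (norm_nonneg _),
    norm_sub_sq_real, norm_sub_sq_real, hy, hw]
  constructor <;> intro h <;> linarith

lemma region_conn {D K : Set (EuclideanSpace ℝ (Fin 3))} (hDK : D ⊆ K)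
    (hKs : K ⊆ Metric.sphere 0 1) (hD : IsCompact D) (hDc : IsConnected D)
    (hK : ¬ K.Subsingleton) :
    IsPreconnected {x : EuclideanSpace ℝ (Fin 3) |
      x ∈ Metric.sphere (0 : EuclideanSpace ℝ (Fin 3)) 1 ∧
      Metric.infDist x D ≤ Metric.infDist x K} := by
  obtain ⟨d, hd⟩ := hDc.nonempty
  have hKne : K.Nonempty := ⟨d, hDK hd⟩
  have hmem : ∀ n ∈ Metric.sphere (0 : EuclideanSpace ℝ (Fin 3)) 1, ∀ y ∈ D,
      (∀ w ∈ K, inner ℝ n w ≤ inner ℝ n y) → Metric.infDist n D ≤ Metric.infDist n K := by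
    intro n hn y hy h
    refine (Metric.infDist_le_dist_of_mem hy).trans ?_
    rw [Metric.le_infDist hKne]
    intro w hw
    exact (dist_le_iff_inner n y w (by simpa using hKs (hDK hy)) (by simpa using hKs hw)).2 (h w hw)
  refine isPreconnected_of_forall d ?_
  rintro x ⟨hx, hxD⟩
  have hx1 : ‖x‖ = 1 := by simpa using hx
  obtain ⟨y, hy, hxy⟩ := hD.exists_infDist_eq_dist ⟨d, hd⟩ x
  have hy1 : ‖y‖ = 1 := by simpa using hKs (hDK hy)
  have hin : ∀ w ∈ K, inner ℝ x w ≤ inner ℝ x y := by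
    intro w hw
    rw [← dist_le_iff_inner x y w hy1 (by simpa using hKs hw), ← hxy]
    exact hxD.trans (Metric.infDist_le_dist_of_mem hw)
  have hxny : x ≠ -y := by
    rintro rfl
    apply hK
    have : ∀ w ∈ K, w = y := by
      intro w hw
      have hw1 : ‖w‖ = 1 := by simpa using hKs hw
      have h := hin w hw
      rw [inner_neg_left, inner_neg_left, real_inner_self_eq_norm_sq, hy1] at h
      have h3 : ‖w - y‖ ^ 2 ≤ 0 := by
        rw [norm_sub_sq_real, hw1, hy1, real_inner_comm]; linarith
      have h4 : ‖w - y‖ = 0 := by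
        have := norm_nonneg (w - y); nlinarith
      exact sub_eq_zero.1 (norm_eq_zero.1 h4)
    intro a ha b hb
    rw [this a ha, this b hb]
  have hz : ∀ z ∈ segment ℝ x y, z ≠ 0 := by
    rintro z ⟨a, b, ha, hb, hab, rfl⟩ h0
    have h1 : a • x = -(b • y) := eq_neg_of_add_eq_zero_left h0
    have h2 := congrArg norm h1
    rw [norm_neg, norm_smul, norm_smul, hx1, hy1, Real.norm_of_nonneg ha,
      Real.norm_of_nonneg hb, mul_one, mul_one] at h2
    subst h2
    have ha' : a ≠ 0 := by rintro rfl; norm_num at hab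
    apply hxny
    rw [← smul_neg] at h1
    exact smul_right_injective _ ha' h1
  let N : EuclideanSpace ℝ (Fin 3) → EuclideanSpace ℝ (Fin 3) := fun z => ‖z‖⁻¹ • z
  have hN : ContinuousOn N (segment ℝ x y) := by
    refine ContinuousOn.smul (ContinuousOn.inv₀ continuous_norm.continuousOn ?_) continuousOn_id
    intro z hzz
    exact norm_ne_zero_iff.2 (hz z hzz)
  have hNc : IsPreconnected (N '' segment ℝ x y) :=
    (convex_segment x y).isPreconnected.image N hN
  have hNx : N x = x := by simp [N, hx1]
  have hNy : N y = y := by simp [N, hy1]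
  refine ⟨D ∪ N '' segment ℝ x y, ?_, Or.inl hd, Or.inr ⟨x, left_mem_segment ℝ x y, hNx⟩, ?_⟩
  · rintro p (hp | ⟨z, hzs, rfl⟩)
    · refine ⟨hKs (hDK hp), ?_⟩
      rw [Metric.infDist_zero_of_mem hp]
      exact Metric.infDist_nonneg
    · have hz0 := hz z hzs
      have hNs : N z ∈ Metric.sphere (0 : EuclideanSpace ℝ (Fin 3)) 1 := by
        simp [N, norm_smul, hz0]
      refine ⟨hNs, hmem _ hNs y hy ?_⟩
      intro w hw
      have hw1 : ‖w‖ = 1 := by simpa using hKs hw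
      obtain ⟨a, b, ha, hb, hab, rfl⟩ := hzs
      simp only [N]
      rw [real_inner_smul_left, real_inner_smul_left]
      refine mul_le_mul_of_nonneg_left ?_ (by positivity)
      rw [inner_add_left, inner_add_left, real_inner_smul_left, real_inner_smul_left,
        real_inner_smul_left, real_inner_smul_left, real_inner_self_eq_norm_sq, hy1]
      have h5 : inner ℝ y w ≤ 1 := by
        have := real_inner_le_norm y w
        rwa [hy1, hw1, one_mul] at this
      have h6 := mul_le_mul_of_nonneg_left (hin w hw) ha
      have h7 := mul_le_mul_of_nonneg_left h5 hb
      linarith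
  · exact IsPreconnected.union y hy ⟨y, right_mem_segment ℝ x y, hNy⟩ hDc.isPreconnected hNc

/-- The geometric–topological core of the proof of the paper's Lemma 6.1:
for three nonempty compact connected subsets `D₁, D₂, D₃` of `S² ⊆ ℝ³` that
pairwise intersect, there is a point of the sphere equidistant (as distance to
a set) from the three of them. -/
theorem stmt_7 (D₁ D₂ D₃ : Set (EuclideanSpace ℝ (Fin 3)))
    (hs₁ : D₁ ⊆ Metric.sphere 0 1) (hs₂ : D₂ ⊆ Metric.sphere 0 1)
    (hs₃ : D₃ ⊆ Metric.sphere 0 1)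
    (hne₁ : D₁.Nonempty) (hne₂ : D₂.Nonempty) (hne₃ : D₃.Nonempty)
    (hcpt₁ : IsCompact D₁) (hcpt₂ : IsCompact D₂) (hcpt₃ : IsCompact D₃)
    (hconn₁ : IsConnected D₁) (hconn₂ : IsConnected D₂) (hconn₃ : IsConnected D₃)
    (h₁₂ : (D₁ ∩ D₂).Nonempty) (h₂₃ : (D₂ ∩ D₃).Nonempty)
    (h₁₃ : (D₁ ∩ D₃).Nonempty) :
    ∃ x ∈ Metric.sphere (0 : EuclideanSpace ℝ (Fin 3)) 1,
      Metric.infDist x D₁ = Metric.infDist x D₂ ∧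
        Metric.infDist x D₂ = Metric.infDist x D₃ := by
  classical
  set K := D₁ ∪ D₂ ∪ D₃ with hKdef
  have hK1 : D₁ ⊆ K := fun _ h => Or.inl (Or.inl h)
  have hK2 : D₂ ⊆ K := fun _ h => Or.inl (Or.inr h)
  have hK3 : D₃ ⊆ K := fun _ h => Or.inr h
  have hKs : K ⊆ Metric.sphere 0 1 := union_subset (union_subset hs₁ hs₂) hs₃
  by_cases hsub : K.Subsingleton
  · obtain ⟨x, hx1, hx2⟩ := h₁₂
    obtain ⟨z, hz⟩ := hne₃
    have hx3 : x ∈ D₃ := by rw [hsub (hK1 hx1) (hK3 hz)]; exact hz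
    refine ⟨x, hs₁ hx1, ?_⟩
    simp [Metric.infDist_zero_of_mem, hx1, hx2, hx3]
  let R : Set (EuclideanSpace ℝ (Fin 3)) → Set Sph := fun D =>
    {x | Metric.infDist (x : EuclideanSpace ℝ (Fin 3)) D ≤
      Metric.infDist (x : EuclideanSpace ℝ (Fin 3)) K}
  have hRc : ∀ D, IsClosed (R D) := fun D =>
    isClosed_le ((Metric.continuous_infDist_pt D).comp continuous_subtype_val)
      ((Metric.continuous_infDist_pt K).comp continuous_subtype_val)
  have hRp : ∀ D, D ⊆ K → IsCompact D → IsConnected D → IsPreconnected (R D) := by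
    intro D h1 h2 h3
    rw [← Topology.IsInducing.subtypeVal.isPreconnected_image]
    convert region_conn h1 hKs h2 h3 hsub using 1
    ext x
    constructor
    · rintro ⟨z, hz, rfl⟩
      exact ⟨z.2, hz⟩
    · rintro ⟨hx, h⟩
      exact ⟨⟨x, hx⟩, h, rfl⟩
  have hRm : ∀ D, ∀ x : Sph, (x : EuclideanSpace ℝ (Fin 3)) ∈ D → x ∈ R D := by
    intro D x hx
    change Metric.infDist _ _ ≤ _
    rw [Metric.infDist_zero_of_mem hx]
    exact Metric.infDist_nonneg
  have hReq : ∀ D, D ⊆ K → D.Nonempty → ∀ x ∈ R D,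
      Metric.infDist (x : EuclideanSpace ℝ (Fin 3)) D =
        Metric.infDist (x : EuclideanSpace ℝ (Fin 3)) K := by
    intro D h1 h2 x hx
    exact le_antisymm hx (Metric.infDist_le_infDist_of_subset h1 h2)
  have hcov : (R D₁ ∪ R D₂) ∪ R D₃ = univ := by
    refine eq_univ_of_forall fun x => ?_
    obtain ⟨y, hy, hxy⟩ := ((hcpt₁.union hcpt₂).union hcpt₃).exists_infDist_eq_dist
      (hne₁.mono hK1) (x : EuclideanSpace ℝ (Fin 3))
    have : ∀ D, y ∈ D → x ∈ R D := by
      intro D hD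
      change Metric.infDist _ _ ≤ Metric.infDist _ _
      rw [hKdef, hxy]
      exact Metric.infDist_le_dist_of_mem hD
    rcases hy with (hy | hy) | hy
    · exact Or.inl (Or.inl (this _ hy))
    · exact Or.inl (Or.inr (this _ hy))
    · exact Or.inr (this _ hy)
  obtain ⟨p, hp1, hp2⟩ := h₁₂
  obtain ⟨q, hq2, hq3⟩ := h₂₃
  obtain ⟨r, hr1, hr3⟩ := h₁₃
  have hconn : IsPreconnected (R D₁ ∪ R D₂) :=
    IsPreconnected.union ⟨p, hs₁ hp1⟩ (hRm _ _ hp1) (hRm _ _ hp2)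
      (hRp _ hK1 hcpt₁ hconn₁) (hRp _ hK2 hcpt₂ hconn₂)
  obtain ⟨x, ⟨hx1, hx3⟩, hx2, -⟩ := unicoherent ((hRc D₁).union (hRc D₂)) (hRc D₃) hconn
    (hRp _ hK3 hcpt₃ hconn₃) hcov ((hRc D₁).inter (hRc D₃)) ((hRc D₂).inter (hRc D₃))
    (union_inter_distrib_right _ _ _)
    ⟨⟨r, hs₁ hr1⟩, hRm _ _ hr1, hRm _ _ hr3⟩ ⟨⟨q, hs₂ hq2⟩, hRm _ _ hq2, hRm _ _ hq3⟩
  refine ⟨x, x.2, ?_, ?_⟩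
  · rw [hReq _ hK1 hne₁ x hx1, hReq _ hK2 hne₂ x hx2]
  · rw [hReq _ hK2 hne₂ x hx2, hReq _ hK3 hne₃ x hx3]
end

section
/- Let n ≥ 2 be a natural number, let k = ⌊2n/3⌋ and m = ⌈2n/3⌉, and define the cyclic distance on {0, 1, …, 2n−1} by d(a, b) = min(|a − b|, 2n − |a − b|). Then for all natural numbers a, b, c with a < k, k ≤ b < 2k, and 2k ≤ c < 2n, at least one of d(a, b), d(b, c), d(a, c) is greater than or equal to m. -/
/-- The cyclic distance on `{0, 1, …, 2n−1}`:
`d(a, b) = min(|a − b|, 2n − |a − b|)`, where `|a − b|` is computed in `ℕ` as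
`(a - b) + (b - a)` (truncated subtraction). -/
def cyclicDist (n a b : ℕ) : ℕ :=
  min ((a - b) + (b - a)) (2 * n - ((a - b) + (b - a)))

/-- The combinatorial core of the paper's Lemma 6.1: split the cycle of length
`2n` into three chains `[0, k)`, `[k, 2k)`, `[2k, 2n)` with `k = ⌊2n/3⌋`; then
any triple taken one from each chain contains a pair at cyclic distance at
least `m = ⌈2n/3⌉`. -/
theorem stmt_8 (n : ℕ) (hn : 2 ≤ n) (k m : ℕ)
    (hk : k = 2 * n / 3) (hm : m = (2 * n + 2) / 3)
    (a b c : ℕ) (ha : a < k) (hb₁ : k ≤ b) (hb₂ : b < 2 * k)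
    (hc₁ : 2 * k ≤ c) (hc₂ : c < 2 * n) :
    m ≤ cyclicDist n a b ∨ m ≤ cyclicDist n b c ∨ m ≤ cyclicDist n a c := by
  unfold cyclicDist
  omega
end
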